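/- Let Y be a CAT(0) space, E : Y → ℝ ∪ {+∞} a λ-convex and lower semicontinuous functional with D(E) nonempty, λ ∈ ℝ, and let (y_t)_{t>0} be a gradient flow trajectory for E starting from y ∈ Y. Then y_t ∈ D(|∂⁻E|) ⊆ D(E) for every t > 0, the map t ↦ E(y_t) is nonincreasing on (0,∞), and the map t ↦ e^{λt}·|∂⁻E|(y_t) is nonincreasing on (0,∞). -/

import Mathlib

open Filter MeasureTheory Set Bornology
open scoped ENNReal Topology NNReal

/-- A (constant-speed, minimizing) geodesic defined on `[0,1]`:
`d(γ_s, γ_t) = |s - t| * d(γ_0, γ_1)` for all `s, t ∈ [0,1]`. -/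
def IsGeodesic {Y : Type*} [MetricSpace Y] (γ : ℝ → Y) : Prop :=
  ∀ s ∈ Set.Icc (0:ℝ) 1, ∀ t ∈ Set.Icc (0:ℝ) 1,
    dist (γ s) (γ t) = |s - t| * dist (γ 0) (γ 1)

/-- A metric space is geodesic if every two points are joined by a geodesic. -/
def GeodesicSpace (Y : Type*) [MetricSpace Y] : Prop :=
  ∀ x y : Y, ∃ γ : ℝ → Y, IsGeodesic γ ∧ γ 0 = x ∧ γ 1 = y

/-- The CAT(0) condition: geodesic space satisfying the comparison inequality
`d²(γ_t, a) ≤ (1-t)·d²(γ_0, a) + t·d²(γ_1, a) − t(1-t)·d²(γ_0, γ_1)`.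
(Completeness is required separately as a typeclass assumption.) -/
def Cat0 (Y : Type*) [MetricSpace Y] : Prop :=
  GeodesicSpace Y ∧
    ∀ γ : ℝ → Y, IsGeodesic γ → ∀ a : Y, ∀ t ∈ Set.Icc (0:ℝ) 1,
      dist (γ t) a ^ 2 ≤ (1 - t) * dist (γ 0) a ^ 2 + t * dist (γ 1) a ^ 2
        - t * (1 - t) * dist (γ 0) (γ 1) ^ 2

/-- A subset is geodesically convex if every geodesic joining two of its points
lies entirely inside it. -/
def GeodesicConvex {Y : Type*} [MetricSpace Y] (C : Set Y) : Prop :=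
  ∀ γ : ℝ → Y, IsGeodesic γ → γ 0 ∈ C → γ 1 ∈ C → ∀ t ∈ Set.Icc (0:ℝ) 1, γ t ∈ C

/-- `lam`-convexity along geodesics of an extended-real-valued functional:
`E(γ_t) ≤ (1-t)E(γ_0) + tE(γ_1) − (lam/2)t(1−t)d²(γ_0,γ_1)`. -/
def LamConvex {Y : Type*} [MetricSpace Y] (lam : ℝ) (E : Y → EReal) : Prop :=
  ∀ γ : ℝ → Y, IsGeodesic γ → ∀ t ∈ Set.Icc (0:ℝ) 1,
    E (γ t) ≤ ((1 - t : ℝ) : EReal) * E (γ 0) + ((t : ℝ) : EReal) * E (γ 1)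
      - ((lam / 2 * t * (1 - t) * dist (γ 0) (γ 1) ^ 2 : ℝ) : EReal)

/-- The descending slope `|∂⁻E|(y) = limsup_{z→y} (E(y)−E(z))⁺ / d(y,z)`,
set to `∞` outside the domain `{E < ∞}` of `E`. -/
noncomputable def descendingSlope {Y : Type*} [MetricSpace Y] (E : Y → EReal) (y : Y) :
    ℝ≥0∞ :=
  if E y = ⊤ then ⊤
  else Filter.limsup (fun z => ENNReal.ofReal ((E y - E z).toReal / dist y z))
      (nhdsWithin y {y}ᶜ)

/-- `ω(y; (y_n)) := limsup_n d(y, y_n)²`. -/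
noncomputable def asymptoticRadius {Y : Type*} [MetricSpace Y] (yn : ℕ → Y) (y : Y) : ℝ :=
  Filter.limsup (fun n => dist y (yn n) ^ 2) Filter.atTop

/-- Weak convergence of a bounded sequence: `y` is an asymptotic center
(i.e. a minimizer of `ω(·; ·)`) of every subsequence. -/
def WeakConv {Y : Type*} [MetricSpace Y] (yn : ℕ → Y) (y : Y) : Prop :=
  Bornology.IsBounded (Set.range yn) ∧
    ∀ φ : ℕ → ℕ, StrictMono φ →
      ∀ z : Y, asymptoticRadius (yn ∘ φ) y ≤ asymptoticRadius (yn ∘ φ) z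

/-- Absolute continuity on a set `I ⊆ ℝ`: there is a nonnegative integrable `g`
with `d(y_s, y_t) ≤ ∫_s^t g` for `s ≤ t` in `I`. -/
def AbsContOnSet {Y : Type*} [MetricSpace Y] (y : ℝ → Y) (I : Set ℝ) : Prop :=
  ∃ g : ℝ → ℝ, (∀ t, 0 ≤ g t) ∧ MeasureTheory.IntegrableOn g I ∧
    ∀ s ∈ I, ∀ t ∈ I, s ≤ t → dist (y s) (y t) ≤ ∫ r in s..t, g r

/-- Absolute continuity on the interval `[a,b]`. -/
def AbsContOn {Y : Type*} [MetricSpace Y] (y : ℝ → Y) (a b : ℝ) : Prop :=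
  AbsContOnSet y (Set.Icc a b)

/-- Local absolute continuity on `(0,∞)`. -/
def LocAbsCont {Y : Type*} [MetricSpace Y] (y : ℝ → Y) : Prop :=
  ∀ a b : ℝ, 0 < a → a ≤ b → AbsContOn y a b

/-- The Evolution Variational Inequality: for every `z`, for a.e. `t > 0` the
derivative of `t ↦ ½ d²(y_t, z)` exists and
`(d/dt)(½d²(y_t,z)) + E(y_t) + (lam/2)d²(y_t,z) ≤ E(z)`. -/
def EVI {Y : Type*} [MetricSpace Y] (lam : ℝ) (E : Y → EReal) (y : ℝ → Y) : Prop :=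
  ∀ z : Y, ∀ᵐ t ∂(MeasureTheory.volume.restrict (Set.Ioi (0:ℝ))),
    ∃ d' : ℝ, HasDerivAt (fun s => dist (y s) z ^ 2 / 2) d' t ∧
      (d' : EReal) + E (y t) + ((lam / 2 * dist (y t) z ^ 2 : ℝ) : EReal) ≤ E z

/-- A gradient flow trajectory for `E` starting from `y₀`: a locally absolutely
continuous curve on `(0,∞)` converging to `y₀` at `0` and satisfying the EVI. -/
def GradientFlow {Y : Type*} [MetricSpace Y] (lam : ℝ) (E : Y → EReal) (y₀ : Y)
    (y : ℝ → Y) : Prop :=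
  LocAbsCont y ∧ Filter.Tendsto y (nhdsWithin 0 (Set.Ioi 0)) (nhds y₀) ∧ EVI lam E y

open AbsolutelyContinuousOnInterval in
/-- A curve whose displacement is controlled by an absolutely continuous real function is
absolutely continuous. -/
lemma AbsolutelyContinuousOnInterval.of_dist_le {X Z : Type*} [PseudoMetricSpace X]
    [PseudoMetricSpace Z] {f : ℝ → X} {g : ℝ → Z} {a b : ℝ}
    (hg : AbsolutelyContinuousOnInterval g a b)
    (h : ∀ s ∈ uIcc a b, ∀ t ∈ uIcc a b, dist (f s) (f t) ≤ dist (g s) (g t)) :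
    AbsolutelyContinuousOnInterval f a b := by
  refine squeeze_zero' (Eventually.of_forall fun _ ↦ Finset.sum_nonneg fun _ _ ↦ dist_nonneg)
    ?_ hg
  rw [eventually_inf_principal]
  filter_upwards with E hE
  exact Finset.sum_le_sum fun i hi ↦ h _ (hE.1 i hi).1 _ (hE.1 i hi).2

lemma AbsContOn.absolutelyContinuousOnInterval {Y : Type*} [MetricSpace Y] {y : ℝ → Y}
    {a b : ℝ} (hab : a ≤ b) (h : AbsContOn y a b) : AbsolutelyContinuousOnInterval y a b := by
  obtain ⟨g, -, hgi, hg⟩ := h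
  have hi : IntervalIntegrable g volume a b := by
    rwa [intervalIntegrable_iff_integrableOn_Icc_of_le hab]
  refine (hi.absolutelyContinuousOnInterval_intervalIntegral left_mem_uIcc).of_dist_le ?_
  rw [uIcc_of_le hab]
  have key : ∀ s ∈ Icc a b, ∀ t ∈ Icc a b, s ≤ t →
      dist (y s) (y t) ≤ dist (∫ v in a..s, g v) (∫ v in a..t, g v) := by
    intro s hs t ht hst
    have hsub : ∀ r ∈ Icc a b, IntervalIntegrable g volume a r := fun r hr ↦
      hi.mono_set (by rw [uIcc_of_le hab, uIcc_of_le hr.1]; exact Icc_subset_Icc_right hr.2)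
    rw [dist_comm (∫ v in a..s, g v), Real.dist_eq,
      intervalIntegral.integral_interval_sub_left (hsub t ht) (hsub s hs)]
    exact (hg s hs t ht hst).trans (le_abs_self _)
  intro s hs t ht
  rcases le_total s t with hst | hst
  · exact key s hs t ht hst
  · rw [dist_comm (y s), dist_comm (∫ v in a..s, g v)]
    exact key t ht s hs hst

/-- An absolutely continuous function with a.e. nonpositive derivative does not increase. -/
lemma AbsolutelyContinuousOnInterval.le_of_ae_deriv_nonpos {f : ℝ → ℝ} {a b : ℝ} (hab : a ≤ b)
    (hf : AbsolutelyContinuousOnInterval f a b)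
    (h : ∀ᵐ x, x ∈ Ioc a b → deriv f x ≤ 0) : f b ≤ f a := by
  have h1 := hf.integral_deriv_eq_sub
  rw [intervalIntegral.integral_of_le hab] at h1
  have h2 : ∫ x in Ioc a b, deriv f x ≤ 0 :=
    integral_nonpos_of_ae ((ae_restrict_iff' measurableSet_Ioc).2 h)
  linarith

lemma LocAbsCont.continuousOn {Y : Type*} [MetricSpace Y] {y : ℝ → Y} (h : LocAbsCont y) :
    ContinuousOn y (Ioi 0) := by
  intro t ht
  have ht : 0 < t := ht
  have hab : t / 2 ≤ t + 1 := by linarith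
  have hac := (h (t / 2) (t + 1) (by linarith) hab).absolutelyContinuousOnInterval hab
  have hd : AbsolutelyContinuousOnInterval (fun s ↦ dist (y s) (y t)) (t / 2) (t + 1) :=
    hac.of_dist_le fun s _ r _ ↦ by
      rw [Real.dist_eq]; exact abs_dist_sub_le _ _ _
  have hc := hd.continuousOn
  rw [uIcc_of_le hab] at hc
  have := hc.continuousAt (Icc_mem_nhds (by linarith : t / 2 < t) (by linarith : t < t + 1))
  refine ContinuousAt.continuousWithinAt ?_
  rw [ContinuousAt, tendsto_iff_dist_tendsto_zero]
  simpa [ContinuousAt] using this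

/-- The primitive `h ↦ ∫₀ʰ e^{λu} du` of the exponential weight. -/
noncomputable def expPrimitive (lam h : ℝ) : ℝ := ∫ u in (0 : ℝ)..h, Real.exp (lam * u)

lemma hasDerivAt_expPrimitive (lam h : ℝ) :
    HasDerivAt (expPrimitive lam) (Real.exp (lam * h)) h :=
  ((by fun_prop : Continuous fun u ↦ Real.exp (lam * u))).integral_hasStrictDerivAt 0 h
    |>.hasDerivAt

@[simp] lemma expPrimitive_zero (lam : ℝ) : expPrimitive lam 0 = 0 := by simp [expPrimitive]

lemma contDiff_expPrimitive (lam : ℝ) : ContDiff ℝ 1 (expPrimitive lam) := by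
  rw [contDiff_one_iff_deriv]
  refine ⟨fun h ↦ (hasDerivAt_expPrimitive lam h).differentiableAt, ?_⟩
  rw [funext fun h ↦ (hasDerivAt_expPrimitive lam h).deriv]
  fun_prop

section Flow

variable {Y : Type*} [MetricSpace Y] {lam : ℝ} {E : Y → EReal} {y : ℝ → Y}

/-- Integrated form of the EVI on an interval where the energy is bounded below by `c₀`. -/
lemma EVI.half_dist_sq_le_of_le (hac : LocAbsCont y) (hevi : EVI lam E y) {s t c c₀ : ℝ}
    (hs : 0 < s) (hst : s ≤ t) {z : Y} (hz : E z = c)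
    (h0 : ∀ r ∈ Ioc s t, (c₀ : EReal) ≤ E (y r)) :
    dist (y t) z ^ 2 / 2 ≤ Real.exp (-(lam * (t - s))) *
      (dist (y s) z ^ 2 / 2 + (c - c₀) * expPrimitive lam (t - s)) := by
  have hy := (hac s t hs hst).absolutelyContinuousOnInterval hst
  have hd : AbsolutelyContinuousOnInterval (fun r ↦ dist (y r) z) s t :=
    hy.of_dist_le fun a _ b _ ↦ by rw [Real.dist_eq]; exact abs_dist_sub_le _ _ _
  have hf : AbsolutelyContinuousOnInterval (fun r ↦ dist (y r) z ^ 2 / 2) s t := by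
    have := (hd.fun_mul hd).const_mul (1 / 2)
    convert this using 2 with r
    ring
  have hw : AbsolutelyContinuousOnInterval (fun r ↦ Real.exp (lam * (r - s))) s t :=
    ContDiffOn.absolutelyContinuousOnInterval (ContDiff.contDiffOn (by fun_prop))
  have hP : AbsolutelyContinuousOnInterval (fun r ↦ expPrimitive lam (r - s)) s t :=
    ContDiffOn.absolutelyContinuousOnInterval
      ((contDiff_expPrimitive lam).comp (contDiff_id.sub contDiff_const)).contDiffOn
  have hH := (hw.fun_mul hf).fun_sub (hP.const_mul (c - c₀))
  have hle := hH.le_of_ae_deriv_nonpos hst ?_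
  · simp only [sub_self, mul_zero, Real.exp_zero, one_mul, expPrimitive_zero, sub_zero] at hle
    rw [Real.exp_neg, ← div_eq_inv_mul, le_div_iff₀ (Real.exp_pos _)]
    linarith
  · have := (ae_restrict_iff' measurableSet_Ioi).1 (hevi z)
    filter_upwards [this] with r hr hrI
    obtain ⟨d', hd', hle⟩ := hr (hs.trans hrI.1)
    have h1 : HasDerivAt (fun r ↦ Real.exp (lam * (r - s))) (Real.exp (lam * (r - s)) * lam) r := by
      simpa using (((hasDerivAt_id r).sub_const s).const_mul lam).exp
    have h2 : HasDerivAt (fun r ↦ expPrimitive lam (r - s)) (Real.exp (lam * (r - s))) r := by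
      simpa using (hasDerivAt_expPrimitive lam (r - s)).comp_sub_const r s
    rw [((h1.fun_mul hd').fun_sub (h2.const_mul (c - c₀))).deriv]
    have h3 : d' + c₀ + lam / 2 * dist (y r) z ^ 2 ≤ c := by
      have : (d' : EReal) + c₀ + ((lam / 2 * dist (y r) z ^ 2 : ℝ) : EReal) ≤ c := by
        rw [← hz]
        refine le_trans ?_ hle
        gcongr
        exact h0 r hrI
      exact_mod_cast this
    nlinarith [Real.exp_pos (lam * (r - s))]

/-- The energy does not increase along a trajectory satisfying the EVI. -/
lemma EVI.energy_antitone (hac : LocAbsCont y) (hevi : EVI lam E y) (hbot : ∀ y, E y ≠ ⊥)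
    (hlsc : LowerSemicontinuous E) {s t : ℝ} (hs : 0 < s) (hst : s ≤ t) :
    E (y t) ≤ E (y s) := by
  by_cases htop : E (y s) = ⊤
  · simp [htop]
  set S : Set ℝ := Icc s t ∩ y ⁻¹' {z | E z ≤ E (y s)}
  have hSc : IsClosed S :=
    (hac.continuousOn.mono fun r hr ↦ hs.trans_le hr.1).preimage_isClosed_of_isClosed isClosed_Icc
      (hlsc.isClosed_preimage (E (y s)))
  have hSs : s ∈ S := ⟨left_mem_Icc.2 hst, le_refl (E (y s))⟩
  have hSb : BddAbove S := ⟨t, fun r hr ↦ hr.1.2⟩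
  have hmem : sSup S ∈ S := hSc.csSup_mem ⟨s, hSs⟩ hSb
  set r := sSup S
  have hle : E (y r) ≤ E (y s) := hmem.2
  have hfin : E (y r) ≠ ⊤ := ne_top_of_le_ne_top htop hle
  have hcoe : E (y r) = ((E (y r)).toReal : EReal) := (EReal.coe_toReal hfin (hbot _)).symm
  have := hevi.half_dist_sq_le_of_le hac (hs.trans_le hmem.1.1) hmem.1.2 hcoe
    (c₀ := (E (y r)).toReal) fun q hq ↦ by
      rw [← hcoe]
      by_contra! hlt
      exact absurd (le_csSup hSb ⟨⟨hmem.1.1.trans hq.1.le, hq.2⟩, (hlt.le.trans hle)⟩)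
        (not_le.2 hq.1)
  have h0 : dist (y t) (y r) = 0 := by
    simp only [dist_self, sub_self, zero_mul] at this
    norm_num at this
    nlinarith [dist_nonneg (x := y t) (y := y r)]
  rw [dist_eq_zero.1 h0]
  exact hle

lemma EVI.energy_ne_top (hac : LocAbsCont y) (hevi : EVI lam E y) (hbot : ∀ y, E y ≠ ⊥)
    (hlsc : LowerSemicontinuous E) (hdom : ∃ y, E y ≠ ⊤) {t : ℝ} (ht : 0 < t) : E (y t) ≠ ⊤ := by
  obtain ⟨z, hz⟩ := hdom
  have h := ae_restrict_of_ae_restrict_of_subset (Ioo_subset_Ioi_self : Ioo 0 t ⊆ Ioi 0) (hevi z)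
  have : (ae (volume.restrict (Ioo 0 t))).NeBot := by
    rw [ae_neBot, Ne, Measure.restrict_eq_zero]; simp [ht]
  obtain ⟨s, ⟨d', -, hle⟩, hs⟩ := (h.and (ae_restrict_mem measurableSet_Ioo)).exists
  refine ne_top_of_le_ne_top (fun htop ↦ hz ?_) (hevi.energy_antitone hac hbot hlsc hs.1 hs.2.le)
  rwa [htop, EReal.coe_add_top, EReal.top_add_coe, top_le_iff] at hle

/-- A trajectory with finite, nonincreasing, right-continuous energy `e` satisfying the
integrated form of the EVI. -/
structure IntegralEVI (lam : ℝ) (E : Y → EReal) (y : ℝ → Y) (e : ℝ → ℝ) : Prop where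
  energy_eq : ∀ t, 0 < t → E (y t) = e t
  antitoneOn : AntitoneOn e (Ioi 0)
  tendsto_right : ∀ t, 0 < t → Tendsto e (𝓝[>] t) (𝓝 (e t))
  continuousOn : ContinuousOn y (Ioi 0)
  half_dist_sq_le : ∀ s t, 0 < s → s ≤ t → ∀ (z : Y) (c : ℝ), E z = c →
    dist (y t) z ^ 2 / 2 ≤ Real.exp (-(lam * (t - s))) *
      (dist (y s) z ^ 2 / 2 + (c - e t) * expPrimitive lam (t - s))

lemma EVI.integralEVI (hac : LocAbsCont y) (hevi : EVI lam E y) (hbot : ∀ y, E y ≠ ⊥)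
    (hlsc : LowerSemicontinuous E) (hdom : ∃ y, E y ≠ ⊤) :
    IntegralEVI lam E y fun t ↦ (E (y t)).toReal := by
  have hE : ∀ t, 0 < t → E (y t) = (E (y t)).toReal := fun t ht ↦
    (EReal.coe_toReal (hevi.energy_ne_top hac hbot hlsc hdom ht) (hbot _)).symm
  have hanti : AntitoneOn (fun t ↦ (E (y t)).toReal) (Ioi 0) := fun s hs t ht hst ↦
    EReal.toReal_le_toReal (hevi.energy_antitone hac hbot hlsc hs hst) (hbot _)
      (hevi.energy_ne_top hac hbot hlsc hdom hs)
  refine ⟨hE, hanti, fun t ht ↦ ?_, hac.continuousOn, fun s t hs hst z c hz ↦ ?_⟩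
  · refine tendsto_order.2 ⟨fun a ha ↦ ?_, fun a ha ↦ ?_⟩
    · have h1 : ∀ᶠ r in 𝓝 t, (a : EReal) < E (y r) :=
        (hac.continuousOn.continuousAt (Ioi_mem_nhds ht)).eventually
          (hlsc (y t) a (show (a : EReal) < E (y t) by rw [hE t ht]; exact_mod_cast ha))
      filter_upwards [nhdsWithin_le_nhds h1, self_mem_nhdsWithin] with r hr hrt
      rw [hE r (ht.trans hrt)] at hr
      exact_mod_cast hr
    · filter_upwards [self_mem_nhdsWithin] with r hr
      exact (hanti ht (ht.trans hr) (le_of_lt hr)).trans_lt ha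
  · refine hevi.half_dist_sq_le_of_le hac hs hst hz fun r hr ↦ ?_
    rw [← hE t (hs.trans_le hst)]
    exact hevi.energy_antitone hac hbot hlsc (hs.trans hr.1) hr.2

lemma tendsto_slope_exp_mul_add (lam μ A c t : ℝ) {q : ℝ → ℝ}
    (hq : Tendsto q (𝓝[>] t) (𝓝 c)) :
    Tendsto (fun r ↦ (r - t)⁻¹ *
      (Real.exp (-(μ * (r - t))) * A + expPrimitive lam (r - t) * q r - A))
      (𝓝[>] t) (𝓝 (-μ * A + c)) := by
  have hsub : 𝓝[>] t ≤ 𝓝[≠] t := nhdsWithin_mono _ fun x hx ↦ ne_of_gt hx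
  have h1 : HasDerivAt (fun r ↦ Real.exp (-(μ * (r - t)))) (-μ) t := by
    simpa using (((hasDerivAt_id t).sub_const t).const_mul μ).neg.exp
  have h2 : HasDerivAt (fun r ↦ expPrimitive lam (r - t)) 1 t := by
    have := hasDerivAt_expPrimitive lam (t - t)
    simpa using this.comp_sub_const t t
  have h1' := (hasDerivAt_iff_tendsto_slope.1 h1).mono_left hsub
  have h2' := (hasDerivAt_iff_tendsto_slope.1 h2).mono_left hsub
  have := (h1'.mul_const A).add (h2'.mul hq)
  rw [one_mul] at this
  refine this.congr fun r ↦ ?_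
  simp only [slope_def_field, sub_self, mul_zero, neg_zero, Real.exp_zero, expPrimitive_zero]
  ring

lemma eventually_slope_lt_of_le_exp_mul_add {lam μ c t ρ : ℝ} {G q : ℝ → ℝ}
    (hq : Tendsto q (𝓝[>] t) (𝓝 c))
    (hG : ∀ r, t < r → G r ≤ Real.exp (-(μ * (r - t))) * G t + expPrimitive lam (r - t) * q r)
    (hρ : -μ * G t + c < ρ) : ∀ᶠ r in 𝓝[>] t, slope G t r < ρ := by
  filter_upwards [(tendsto_slope_exp_mul_add lam μ (G t) c t hq).eventually_lt_const hρ,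
    self_mem_nhdsWithin] with r hr hrt
  refine lt_of_le_of_lt ?_ hr
  rw [slope_def_field, div_eq_inv_mul]
  have : 0 < r - t := sub_pos.2 hrt
  gcongr
  exact hG r hrt

namespace IntegralEVI

variable {e : ℝ → ℝ}

lemma continuousAt (h : IntegralEVI lam E y e) {t : ℝ} (ht : 0 < t) : ContinuousAt y t :=
  h.continuousOn.continuousAt (Ioi_mem_nhds ht)

/-- The EVI in terms of upper right Dini derivatives, valid at every positive time. -/
lemma eventually_slope_lt (h : IntegralEVI lam E y e)
    {t c ρ : ℝ} (ht : 0 < t) {z : Y} (hz : E z = c)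
    (hρ : -lam * (dist (y t) z ^ 2 / 2) + (c - e t) < ρ) :
    ∀ᶠ r in 𝓝[>] t, slope (fun r ↦ dist (y r) z ^ 2 / 2) t r < ρ := by
  have hexp : Tendsto (fun r ↦ Real.exp (-(lam * (r - t)))) (𝓝[>] t) (𝓝 1) := by
    have : Continuous fun r ↦ Real.exp (-(lam * (r - t))) := by fun_prop
    simpa using (this.tendsto t).mono_left nhdsWithin_le_nhds
  refine eventually_slope_lt_of_le_exp_mul_add (lam := lam) (μ := lam)
    (q := fun r ↦ Real.exp (-(lam * (r - t))) * (c - e r)) (c := c - e t) ?_ (fun r hr ↦ ?_) hρ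
  · simpa using hexp.mul ((h.tendsto_right t ht).const_sub c)
  · refine (h.half_dist_sq_le t r ht hr.le z c hz).trans_eq ?_
    ring

/-- Contraction between a trajectory and its time shift. -/
lemma dist_shift_le (h : IntegralEVI lam E y e)
    {s t k : ℝ} (hs : 0 < s) (hst : s ≤ t) (hk : 0 ≤ k) :
    dist (y (t + k)) (y t) ≤ Real.exp (-(lam * (t - s))) * dist (y (s + k)) (y s) := by
  set G : ℝ → ℝ := fun r ↦ dist (y (r + k)) (y r) ^ 2 / 2 with hGdef
  have hcont : ContinuousOn G (Icc s t) := by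
    intro r hr
    have hr0 : 0 < r := hs.trans_le hr.1
    have h1 : ContinuousAt (fun r ↦ y (r + k)) r :=
      ContinuousAt.comp (f := fun r ↦ r + k) (h.continuousAt (by linarith)) (by fun_prop)
    have h2 := h.continuousAt hr0
    exact ContinuousAt.continuousWithinAt (((h1.dist h2).pow 2).div_const 2)
  have hdini : ∀ x ∈ Ico s t, ∀ r, -(2 * lam) * G x < r →
      ∃ᶠ z in 𝓝[>] x, (z - x)⁻¹ * (G z - G x) < r := by
    intro x hx ρ hρ
    have hx0 : 0 < x := hs.trans_le hx.1
    have hexp : ∀ μ : ℝ, Tendsto (fun r ↦ Real.exp (-(μ * (r - x)))) (𝓝[>] x) (𝓝 1) := by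
      intro μ
      have : Continuous fun r ↦ Real.exp (-(μ * (r - x))) := by fun_prop
      simpa using (this.tendsto x).mono_left nhdsWithin_le_nhds
    have hek : Tendsto (fun r ↦ e (r + k)) (𝓝[>] x) (𝓝 (e (x + k))) := by
      refine (h.tendsto_right (x + k) (by linarith)).comp ?_
      refine tendsto_nhdsWithin_of_tendsto_nhds_of_eventually_within _ ?_ ?_
      · have : Continuous fun r : ℝ ↦ r + k := by fun_prop
        exact (this.tendsto x).mono_left nhdsWithin_le_nhds
      · filter_upwards [self_mem_nhdsWithin] with r hr
        exact add_lt_add_left (show x < r from hr) k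
    have hq : Tendsto (fun r ↦ Real.exp (-(2 * lam * (r - x))) * (e x - e (r + k)) +
        Real.exp (-(lam * (r - x))) * (e (r + k) - e r)) (𝓝[>] x) (𝓝 0) := by
      have := ((hexp (2 * lam)).mul (hek.const_sub (e x))).add
        ((hexp lam).mul (hek.sub (h.tendsto_right x hx0)))
      simpa using this
    have hev := eventually_slope_lt_of_le_exp_mul_add (lam := lam) (μ := 2 * lam) (G := G)
      (ρ := ρ) hq (fun r hr ↦ ?_) (by simpa using hρ)
    · refine Eventually.frequently (hev.mono fun r hr ↦ ?_)
      rwa [slope_def_field, div_eq_inv_mul] at hr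
    · have hr0 : 0 < r := hx0.trans hr
      have h1 := h.half_dist_sq_le x r hx0 hr.le (y (r + k)) _ (h.energy_eq _ (by linarith))
      have h2 := h.half_dist_sq_le (x + k) (r + k) (by linarith) (by linarith) (y x) _
        (h.energy_eq x hx0)
      rw [show r + k - (x + k) = r - x by ring] at h2
      have h3 : Real.exp (-(2 * lam * (r - x))) =
          Real.exp (-(lam * (r - x))) * Real.exp (-(lam * (r - x))) := by
        rw [← Real.exp_add]; ring_nf
      rw [dist_comm (y r), dist_comm (y x)] at h1
      have h4 := mul_le_mul_of_nonneg_left h2 (Real.exp_pos (-(lam * (r - x)))).le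
      simp only [hGdef]
      rw [h3]
      linarith
  have hgr := le_gronwallBound_of_liminf_deriv_right_le (ε := 0) (K := -(2 * lam)) hcont hdini
    le_rfl (fun x _ ↦ by simp) t (right_mem_Icc.2 hst)
  rw [gronwallBound_ε0] at hgr
  have hsq : dist (y (t + k)) (y t) ^ 2 ≤
      (Real.exp (-(lam * (t - s))) * dist (y (s + k)) (y s)) ^ 2 := by
    rw [mul_pow, ← Real.exp_nat_mul]
    have h5 : ((2 : ℕ) : ℝ) * -(lam * (t - s)) = -(2 * lam) * (t - s) := by push_cast; ring
    rw [h5]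
    simp only [hGdef] at hgr
    linarith
  exact (pow_le_pow_iff_left₀ dist_nonneg (by positivity) two_ne_zero).1 hsq

/-- The metric speed dominates the global slope of the energy. -/
lemma energy_sub_le (h : IntegralEVI lam E y e) {t C c : ℝ} (ht : 0 < t)
    (hC : ∀ᶠ r in 𝓝[>] t, dist (y r) (y t) ≤ C * (r - t)) {z : Y} (hz : E z = c) :
    e t - c + lam / 2 * dist (y t) z ^ 2 ≤ C * dist (y t) z := by
  suffices hρ : ∀ ρ, -lam * (dist (y t) z ^ 2 / 2) + (c - e t) < ρ → -(C * dist (y t) z) ≤ ρ by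
    have := le_of_forall_gt_imp_ge_of_dense hρ
    linarith
  intro ρ hρ
  have hd : Tendsto (fun r ↦ dist (y r) z) (𝓝[>] t) (𝓝 (dist (y t) z)) :=
    Tendsto.mono_left ((h.continuousAt ht).dist continuousAt_const) nhdsWithin_le_nhds
  have hlim : Tendsto (fun r ↦ -(C / 2 * (dist (y r) z + dist (y t) z))) (𝓝[>] t)
      (𝓝 (-(C * dist (y t) z))) := by
    have := ((hd.add_const (dist (y t) z)).const_mul (C / 2)).neg
    convert this using 2
    ring
  refine le_of_tendsto hlim ?_
  filter_upwards [h.eventually_slope_lt ht hz hρ, hC, self_mem_nhdsWithin] with r h1 h2 hr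
  have hrt : 0 < r - t := sub_pos.2 hr
  refine le_trans ?_ h1.le
  rw [slope_def_field, le_div_iff₀ hrt]
  have h3 : dist (y t) z ≤ dist (y r) (y t) + dist (y r) z := by
    rw [dist_comm (y r) (y t)]; exact dist_triangle _ _ _
  have h4 : 0 ≤ dist (y r) z + dist (y t) z := by positivity
  nlinarith

lemma descendingSlope_le (h : IntegralEVI lam E y e) {t C : ℝ} (ht : 0 < t) (hC0 : 0 ≤ C)
    (hC : ∀ᶠ r in 𝓝[>] t, dist (y r) (y t) ≤ C * (r - t)) (hbot : ∀ y, E y ≠ ⊥) :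
    descendingSlope E (y t) ≤ ENNReal.ofReal C := by
  have het := h.energy_eq t ht
  rw [descendingSlope, if_neg (by rw [het]; exact EReal.coe_ne_top _)]
  refine ENNReal.le_of_forall_pos_le_add fun ε hε _ ↦ limsup_le_of_le (by isBoundedDefault) ?_
  have hd : ∀ᶠ z in 𝓝 (y t), |lam| / 2 * dist (y t) z < ε := by
    have : Continuous fun z ↦ |lam| / 2 * dist (y t) z := by fun_prop
    exact (this.tendsto (y t)).eventually_lt_const (by simpa using hε)
  filter_upwards [nhdsWithin_le_nhds hd, self_mem_nhdsWithin] with z hz hne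
  have hpos : 0 < dist (y t) z := dist_pos.2 (Ne.symm hne)
  rw [← ENNReal.ofReal_coe_nnreal, ← ENNReal.ofReal_add hC0 ε.coe_nonneg]
  refine ENNReal.ofReal_le_ofReal ?_
  rw [div_le_iff₀ hpos]
  by_cases htop : E z = ⊤
  · rw [htop, EReal.sub_top, EReal.toReal_bot]
    positivity
  · have hEz : E z = ((E z).toReal : EReal) := (EReal.coe_toReal htop (hbot z)).symm
    have h1 := h.energy_sub_le ht hC hEz
    rw [het, hEz, ← EReal.coe_sub, EReal.toReal_coe]
    have h2 : -(|lam| / 2 * dist (y t) z ^ 2) ≤ lam / 2 * dist (y t) z ^ 2 := by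
      nlinarith [neg_abs_le lam, sq_nonneg (dist (y t) z)]
    nlinarith

/-- The descending slope of the energy dominates the metric speed. -/
lemma eventually_dist_le (h : IntegralEVI lam E y e)
    {t M : ℝ} (ht : 0 < t) (hM : descendingSlope E (y t) < ENNReal.ofReal M) :
    ∀ᶠ r in 𝓝[>] t, dist (y r) (y t) ≤ M * (r - t) := by
  obtain ⟨M', hM', hMM⟩ := ENNReal.lt_iff_exists_nnreal_btwn.1 hM
  have hMM' : (M' : ℝ) < M := by
    rw [← ENNReal.ofReal_coe_nnreal] at hMM
    exact (ENNReal.ofReal_lt_ofReal_iff_of_nonneg M'.coe_nonneg).1 hMM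
  have hM0 : 0 < M := M'.coe_nonneg.trans_lt hMM'
  have het := h.energy_eq t ht
  rw [descendingSlope, if_neg (by rw [het]; exact EReal.coe_ne_top _)] at hM'
  have hz := eventually_nhdsWithin_iff.1 (eventually_lt_of_limsup_lt hM')
  have hr := (h.continuousAt ht).eventually hz
  have hdist : ∀ᶠ r in 𝓝 t, |lam| / 2 * dist (y r) (y t) < M - M' := by
    have : ContinuousAt (fun r ↦ |lam| / 2 * dist (y r) (y t)) t :=
      ((h.continuousAt ht).dist continuousAt_const).const_mul _
    exact this.tendsto.eventually_lt_const (by simpa using hMM')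
  have hnear := hr.and hdist
  obtain ⟨u, htu, hu⟩ := mem_nhdsGE_iff_exists_Icc_subset.1 (mem_nhdsWithin_of_mem_nhds hnear)
  have hpos : ∀ r ∈ Icc t u, 0 < r := fun r hr ↦ ht.trans_le hr.1
  have henergy : ∀ r ∈ Icc t u, e t - e r ≤ M' * dist (y r) (y t) := by
    intro r hrI
    by_cases heq : y r = y t
    · have : e r = e t := by
        have := h.energy_eq r (hpos r hrI)
        rw [heq, het] at this
        exact_mod_cast this.symm
      simp [this, heq]
    · have h1 := (hu hrI).1 heq
      rw [het, h.energy_eq r (hpos r hrI), ← EReal.coe_sub, EReal.toReal_coe,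
        ← ENNReal.ofReal_coe_nnreal] at h1
      have h2 := (ENNReal.ofReal_lt_ofReal_iff'.1 h1).1
      rw [div_lt_iff₀ (dist_pos.2 (Ne.symm heq)), dist_comm] at h2
      exact h2.le
  filter_upwards [Icc_mem_nhdsGT htu] with r hrI
  refine le_of_forall_pos_le_add fun η hη ↦ ?_
  have hcmp := image_le_of_liminf_slope_right_lt_deriv_boundary (a := t) (b := u)
    (f := fun r ↦ dist (y r) (y t) ^ 2 / 2)
    (f' := fun r ↦ -lam * (dist (y r) (y t) ^ 2 / 2) + (e t - e r))
    (B := fun r ↦ (M * (r - t) + η) ^ 2 / 2) (B' := fun r ↦ (M * (r - t) + η) * M)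
    (fun x hx ↦ ContinuousAt.continuousWithinAt
      ((((h.continuousAt (hpos x hx)).dist continuousAt_const).pow 2).div_const 2))
    (fun x hx ρ hρ ↦ (h.eventually_slope_lt (hpos x (Ico_subset_Icc_self hx)) het hρ).frequently)
    (by simp; positivity)
    (fun x ↦ by
      have := ((((((hasDerivAt_id x).sub_const t).const_mul M).add_const η).fun_pow 2).div_const 2)
      refine this.congr_deriv ?_
      simp
      ring)
    (fun x hx heq ↦ ?_) hrI
  · have h1 : dist (y r) (y t) ^ 2 ≤ (M * (r - t) + η) ^ 2 := by
      simpa using (div_le_div_iff_of_pos_right (two_pos (α := ℝ))).1 hcmp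
    have : 0 ≤ r - t := sub_nonneg.2 hrI.1
    exact (pow_le_pow_iff_left₀ dist_nonneg (by positivity) two_ne_zero).1 h1
  · have hxI := Ico_subset_Icc_self hx
    have hxt : 0 ≤ x - t := sub_nonneg.2 hx.1
    have hD : dist (y x) (y t) = M * (x - t) + η := by
      have : dist (y x) (y t) ^ 2 = (M * (x - t) + η) ^ 2 := by
        linarith
      exact (pow_left_inj₀ dist_nonneg (by positivity) two_ne_zero).1 this
    have hDpos : 0 < dist (y x) (y t) := by rw [hD]; positivity
    simp only [← hD]
    have h1 := henergy x hxI
    have h2 : |lam| / 2 * dist (y x) (y t) < M - M' := (hu hxI).2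
    have h3 := mul_lt_mul_of_pos_right h2 hDpos
    have h4 : -(|lam| / 2 * dist (y x) (y t) ^ 2) ≤ lam / 2 * dist (y x) (y t) ^ 2 := by
      nlinarith [neg_abs_le lam, sq_nonneg (dist (y x) (y t))]
    linarith

/-- Before every positive time there is a time at which the metric speed is finite. -/
lemma exists_eventually_dist_le (h : IntegralEVI lam E y e) {t : ℝ} (ht : 0 < t) :
    ∃ s ∈ Ioo 0 t, ∃ C, 0 ≤ C ∧ ∀ᶠ r in 𝓝[>] s, dist (y r) (y s) ≤ C * (r - s) := by
  have hmono : MonotoneOn (fun r ↦ -e r) (Ioo 0 t) := fun a ha b hb hab ↦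
    neg_le_neg (h.antitoneOn ha.1 hb.1 hab)
  have hae := hmono.ae_differentiableWithinAt measurableSet_Ioo
  have : (ae (volume.restrict (Ioo 0 t))).NeBot := by
    rw [ae_neBot, Ne, Measure.restrict_eq_zero]; simp [ht]
  obtain ⟨s, hdiff, hs⟩ := (hae.and (ae_restrict_mem measurableSet_Ioo)).exists
  have hd := (hdiff.differentiableAt (Ioo_mem_nhds hs.1 hs.2)).hasDerivAt
  have hsub : 𝓝[>] s ≤ 𝓝[≠] s := nhdsWithin_mono _ fun x hx ↦ ne_of_gt hx
  have h1 := (hasDerivAt_iff_tendsto_slope.1 hd).mono_left hsub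
  have h2 := tendsto_slope_exp_mul_add lam 0 0 1 s (q := fun _ ↦ 1) tendsto_const_nhds
  have h3 : Tendsto (fun r ↦ 2 * Real.exp (-(lam * (r - s)))) (𝓝[>] s) (𝓝 (2 * 1)) := by
    have : Continuous fun r ↦ 2 * Real.exp (-(lam * (r - s))) := by fun_prop
    simpa using (this.tendsto s).mono_left nhdsWithin_le_nhds
  obtain ⟨K, hK⟩ := (h3.mul (h1.mul h2)).isBoundedUnder_le
  rw [eventually_map] at hK
  refine ⟨s, hs, √|K|, Real.sqrt_nonneg _, ?_⟩
  filter_upwards [hK, self_mem_nhdsWithin] with r hr hrs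
  have hrs' : 0 < r - s := sub_pos.2 hrs
  have h4 := h.half_dist_sq_le s r hs.1 (le_of_lt hrs) (y s) _ (h.energy_eq s hs.1)
  simp only [slope_def_field, mul_zero, zero_add, mul_one, sub_zero] at hr
  have h5 : dist (y r) (y s) ^ 2 ≤ (√|K| * (r - s)) ^ 2 := by
    rw [mul_pow, Real.sq_sqrt (abs_nonneg _), ← div_le_iff₀ (by positivity)]
    refine le_trans ?_ (hr.trans (le_abs_self K))
    rw [div_le_iff₀ (by positivity)]
    have h6 : 2 * Real.exp (-(lam * (r - s))) * ((-e r - -e s) / (r - s) *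
        ((r - s)⁻¹ * expPrimitive lam (r - s))) * (r - s) ^ 2 =
        2 * (Real.exp (-(lam * (r - s))) * ((e s - e r) * expPrimitive lam (r - s))) := by
      field_simp
      ring
    rw [h6]
    simp only [dist_self] at h4
    norm_num at h4
    linarith
  exact (pow_le_pow_iff_left₀ dist_nonneg (by positivity) two_ne_zero).1 h5

/-- A bound on the metric speed propagates forward in time. -/
lemma eventually_dist_le_of_le (h : IntegralEVI lam E y e)
    {s t C : ℝ} (hs : 0 < s) (hst : s ≤ t)
    (hC : ∀ᶠ r in 𝓝[>] s, dist (y r) (y s) ≤ C * (r - s)) :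
    ∀ᶠ r in 𝓝[>] t, dist (y r) (y t) ≤ Real.exp (-(lam * (t - s))) * C * (r - t) := by
  have htend : Tendsto (fun r ↦ s + (r - t)) (𝓝[>] t) (𝓝[>] s) := by
    refine tendsto_nhdsWithin_of_tendsto_nhds_of_eventually_within _ ?_ ?_
    · have : Continuous fun r : ℝ ↦ s + (r - t) := by fun_prop
      simpa using (this.tendsto t).mono_left nhdsWithin_le_nhds
    · filter_upwards [self_mem_nhdsWithin] with r hr
      have : t < r := hr
      change s < s + (r - t)
      linarith
  filter_upwards [htend.eventually hC, self_mem_nhdsWithin] with r hr hrt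
  have h1 := h.dist_shift_le hs hst (sub_nonneg.2 (le_of_lt hrt))
  rw [add_sub_cancel] at h1
  refine h1.trans ?_
  rw [mul_assoc]
  gcongr
  simpa using hr

lemma descendingSlope_ne_top (h : IntegralEVI lam E y e)
    {t : ℝ} (ht : 0 < t) (hbot : ∀ y, E y ≠ ⊥) :
    descendingSlope E (y t) ≠ ⊤ := by
  obtain ⟨s, hs, C, hC0, hC⟩ := h.exists_eventually_dist_le ht
  exact ne_top_of_le_ne_top ENNReal.ofReal_ne_top
    (h.descendingSlope_le ht (by positivity) (h.eventually_dist_le_of_le hs.1 hs.2.le hC) hbot)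

lemma exp_mul_descendingSlope_le (h : IntegralEVI lam E y e)
    {s t : ℝ} (hs : 0 < s) (hst : s ≤ t) (hbot : ∀ y, E y ≠ ⊥) :
    ENNReal.ofReal (Real.exp (lam * t)) * descendingSlope E (y t) ≤
      ENNReal.ofReal (Real.exp (lam * s)) * descendingSlope E (y s) := by
  have hfin := h.descendingSlope_ne_top hs hbot
  have key : descendingSlope E (y t) ≤
      ENNReal.ofReal (Real.exp (-(lam * (t - s)))) * descendingSlope E (y s) := by
    rw [← ENNReal.ofReal_toReal hfin, ← ENNReal.ofReal_mul (Real.exp_pos _).le]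
    refine ge_of_tendsto (x := 𝓝[>] (descendingSlope E (y s)).toReal)
      (f := fun M ↦ ENNReal.ofReal (Real.exp (-(lam * (t - s))) * M)) ?_ ?_
    · have : Continuous fun M ↦ ENNReal.ofReal (Real.exp (-(lam * (t - s))) * M) :=
        ENNReal.continuous_ofReal.comp (continuous_const_mul _)
      exact (this.tendsto _).mono_left nhdsWithin_le_nhds
    · filter_upwards [self_mem_nhdsWithin] with M hM
      have hM0 : 0 ≤ M := ENNReal.toReal_nonneg.trans (le_of_lt hM)
      have hlt : descendingSlope E (y s) < ENNReal.ofReal M :=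
        (ENNReal.lt_ofReal_iff_toReal_lt hfin).2 hM
      exact h.descendingSlope_le (hs.trans_le hst) (by positivity)
        (h.eventually_dist_le_of_le hs hst (h.eventually_dist_le hs hlt)) hbot
  calc ENNReal.ofReal (Real.exp (lam * t)) * descendingSlope E (y t)
      ≤ ENNReal.ofReal (Real.exp (lam * t)) *
        (ENNReal.ofReal (Real.exp (-(lam * (t - s)))) * descendingSlope E (y s)) := by gcongr
    _ = ENNReal.ofReal (Real.exp (lam * s)) * descendingSlope E (y s) := by
      rw [← mul_assoc, ← ENNReal.ofReal_mul (Real.exp_pos _).le, ← Real.exp_add]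
      ring_nf

end IntegralEVI

end Flow

/-- **Monotonicity properties of gradient flow trajectories** on a CAT(0) space: for
every `t > 0` one has `y_t ∈ D(|∂⁻E|) ⊆ D(E)`, the energy `t ↦ E(y_t)` is nonincreasing
on `(0,∞)` and `t ↦ e^{λt}|∂⁻E|(y_t)` is nonincreasing on `(0,∞)`. -/
theorem gradientFlow_monotonicity {Y : Type*} [MetricSpace Y] [CompleteSpace Y]
    (hY : Cat0 Y) (lam : ℝ) (E : Y → EReal) (hbot : ∀ y, E y ≠ ⊥)
    (hconv : LamConvex lam E) (hlsc : LowerSemicontinuous E) (hdom : ∃ y, E y ≠ ⊤)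
    (y₀ : Y) (ytraj : ℝ → Y) (hgf : GradientFlow lam E y₀ ytraj) :
    (∀ t : ℝ, 0 < t → descendingSlope E (ytraj t) ≠ ⊤ ∧ E (ytraj t) ≠ ⊤) ∧
      (∀ s t : ℝ, 0 < s → s ≤ t → E (ytraj t) ≤ E (ytraj s)) ∧
      (∀ s t : ℝ, 0 < s → s ≤ t →
        ENNReal.ofReal (Real.exp (lam * t)) * descendingSlope E (ytraj t) ≤
          ENNReal.ofReal (Real.exp (lam * s)) * descendingSlope E (ytraj s)) := by
  obtain ⟨hac, -, hevi⟩ := hgf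
  have h := hevi.integralEVI hac hbot hlsc hdom
  exact ⟨fun t ht ↦ ⟨h.descendingSlope_ne_top ht hbot, hevi.energy_ne_top hac hbot hlsc hdom ht⟩,
    fun s t hs hst ↦ hevi.energy_antitone hac hbot hlsc hs hst,
    fun s t hs hst ↦ h.exp_mul_descendingSlope_le hs hst hbot⟩
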